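/- Let d ≥ 2, let A : ℝ^d → ℝ^{d×d} be a C¹ symmetric matrix-valued function, let b : ℝ^d → ℝ^d be C¹, let c : ℝ^d → ℝ, let f : ℝ^d → ℝ be C² with f(x) ≠ 0 for all x in an open set Ω ⊂ ℝ^d, and suppose u : ℝ^d × [0,∞) → ℝ is of class C² in time and C³ in space with continuous mixed derivatives and satisfies u_t = Lu + c·u on ℝ^d × [0,∞) with u(·,0) = f, where Lw = div(A∇w) + b·∇w. Then the function v := ∂_t u satisfies, for all x ∈ Ω and t ∈ [0,T], the nonlinear equation v_t(x,t) = Lv(x,t) − (Lf(x)/f(x)) v(x,t) + (v(x,0)/f(x)) v(x,t). -/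

import Mathlib

/-!
Differentiating `u_t = Lu + c u` in time gives `v_t = Lv + c v`, because the coefficients do not
depend on `t` and `∂_t` commutes with `L`. The equation at `t = 0`, where `u = f`, reads
`v(·, 0) = Lf + c f`, and solving it for `c` eliminates `c`.

Since `A` is only once differentiable, the flux `A ∇u` need not be `C²`, and symmetry of second
derivatives does not apply to it. It is applied to `u` and `∂_j u` instead, after writing `L` in
nondivergence form.
-/

open MeasureTheory

/-- Partial derivative `∂_i w (x)` of a scalar function on `ℝ^d`. -/
noncomputable def pd {d : ℕ} (w : EuclideanSpace ℝ (Fin d) → ℝ) (i : Fin d)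
    (x : EuclideanSpace ℝ (Fin d)) : ℝ :=
  fderiv ℝ w x (EuclideanSpace.single i 1)

/-- The elliptic operator `L w = div(A ∇w) + b · ∇w
  = Σ_i ∂_i (Σ_j A_{ij} ∂_j w) + Σ_i b_i ∂_i w`. -/
noncomputable def ellOp {d : ℕ} (A : EuclideanSpace ℝ (Fin d) → Matrix (Fin d) (Fin d) ℝ)
    (b : EuclideanSpace ℝ (Fin d) → Fin d → ℝ)
    (w : EuclideanSpace ℝ (Fin d) → ℝ) (x : EuclideanSpace ℝ (Fin d)) : ℝ :=
  (∑ i, pd (fun y => ∑ j, A y i j * pd w j y) i x) + ∑ i, b x i * pd w i x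

section SpaceTime

variable {𝕜 E F : Type*} [NontriviallyNormedField 𝕜] [NormedAddCommGroup E] [NormedSpace 𝕜 E]
  [NormedAddCommGroup F] [NormedSpace 𝕜 F] {m n : WithTop ℕ∞} {u : E → 𝕜 → F}

theorem fderiv_left_eq_comp_inl {x : E} {t : 𝕜}
    (hu : DifferentiableAt 𝕜 (fun q : E × 𝕜 => u q.1 q.2) (x, t)) :
    fderiv 𝕜 (fun y => u y t) x =
      (fderiv 𝕜 (fun q : E × 𝕜 => u q.1 q.2) (x, t)).comp (.inl 𝕜 E 𝕜) :=
  (hu.hasFDerivAt.comp (f := fun y => (y, t)) x (hasFDerivAt_prodMk_left x t)).fderiv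

theorem hasDerivAt_right {x : E} {t : 𝕜}
    (hu : DifferentiableAt 𝕜 (fun q : E × 𝕜 => u q.1 q.2) (x, t)) :
    HasDerivAt (u x) (fderiv 𝕜 (fun q : E × 𝕜 => u q.1 q.2) (x, t) (0, 1)) t :=
  hu.hasFDerivAt.comp_hasDerivAt t ((hasDerivAt_const t x).prodMk (hasDerivAt_id t))

theorem contDiff_fderiv_left (hu : ContDiff 𝕜 n fun q : E × 𝕜 => u q.1 q.2) (hmn : m + 1 ≤ n) :
    ContDiff 𝕜 m fun q : E × 𝕜 => fderiv 𝕜 (fun y => u y q.2) q.1 := by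
  have hu' : Differentiable 𝕜 fun q : E × 𝕜 => u q.1 q.2 :=
    hu.differentiable (by rintro rfl; simp at hmn)
  simp only [fun q : E × 𝕜 => fderiv_left_eq_comp_inl (hu' (q.1, q.2))]
  exact (hu.fderiv_right hmn).clm_comp contDiff_const

theorem contDiff_deriv_right (hu : ContDiff 𝕜 n fun q : E × 𝕜 => u q.1 q.2) (hmn : m + 1 ≤ n) :
    ContDiff 𝕜 m fun q : E × 𝕜 => deriv (u q.1) q.2 := by
  have hu' : Differentiable 𝕜 fun q : E × 𝕜 => u q.1 q.2 :=
    hu.differentiable (by rintro rfl; simp at hmn)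
  simp only [fun q : E × 𝕜 => (hasDerivAt_right (hu' (q.1, q.2))).deriv]
  exact hu.contDiff_fderiv_apply hmn |>.comp (contDiff_id.prodMk contDiff_const)

theorem hasDerivAt_fderiv_left (hu : ContDiff 𝕜 n fun q : E × 𝕜 => u q.1 q.2)
    (hn : minSmoothness 𝕜 2 ≤ n) (x : E) (t : 𝕜) :
    HasDerivAt (fun s => fderiv 𝕜 (fun y => u y s) x)
      (fderiv 𝕜 (fun y => deriv (u y) t) x) t := by
  have h2n : 1 + 1 ≤ n := by simpa [one_add_one_eq_two] using le_minSmoothness.trans hn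
  set g : E × 𝕜 → F := fun q => u q.1 q.2
  have hg_diff : Differentiable 𝕜 g := hu.differentiable (by rintro rfl; simp at h2n)
  have hDg : HasFDerivAt (fderiv 𝕜 g) (fderiv 𝕜 (fderiv 𝕜 g) (x, t)) (x, t) :=
    ((hu.fderiv_right h2n).differentiable one_ne_zero _).hasFDerivAt
  have h_time : HasDerivAt (fun s => (fderiv 𝕜 g (x, s)).comp (.inl 𝕜 E 𝕜))
      ((fderiv 𝕜 (fderiv 𝕜 g) (x, t) (0, 1)).comp (.inl 𝕜 E 𝕜)) t := by
    simpa using (hDg.comp_hasDerivAt t ((hasDerivAt_const t x).prodMk (hasDerivAt_id t))).clm_comp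
      (hasDerivAt_const t (.inl 𝕜 E 𝕜))
  have h_space : HasFDerivAt (fun y => fderiv 𝕜 g (y, t) (0, 1))
      (((fderiv 𝕜 (fderiv 𝕜 g) (x, t)).comp (.inl 𝕜 E 𝕜)).flip (0, 1)) x := by
    simpa using HasFDerivAt.clm_apply (c := fun y => fderiv 𝕜 g (y, t))
      (hDg.comp x (hasFDerivAt_prodMk_left x t)) (hasFDerivAt_const ((0, 1) : E × 𝕜) x)
  have h_symm : (fderiv 𝕜 (fderiv 𝕜 g) (x, t) (0, 1)).comp (.inl 𝕜 E 𝕜) =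
      ((fderiv 𝕜 (fderiv 𝕜 g) (x, t)).comp (.inl 𝕜 E 𝕜)).flip (0, 1) := by
    ext v
    exact hu.contDiffAt.isSymmSndFDerivAt hn (0, 1) (v, 0)
  simp only [fun y s => (hasDerivAt_right (hg_diff (y, s))).deriv,
    fun y s => fderiv_left_eq_comp_inl (hg_diff (y, s))]
  rw [h_space.fderiv, ← h_symm]
  exact h_time

end SpaceTime

section PartialDerivatives

variable {d : ℕ} {n m : WithTop ℕ∞} {i : Fin d} {x : EuclideanSpace ℝ (Fin d)}
  {u : EuclideanSpace ℝ (Fin d) → ℝ → ℝ}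

theorem pd_mul {w z : EuclideanSpace ℝ (Fin d) → ℝ} (hw : DifferentiableAt ℝ w x)
    (hz : DifferentiableAt ℝ z x) :
    pd (fun y => w y * z y) i x = w x * pd z i x + pd w i x * z x := by
  simp [pd, fderiv_fun_mul hw hz, mul_comm]

theorem pd_sum {ι : Type*} {s : Finset ι} {w : ι → EuclideanSpace ℝ (Fin d) → ℝ}
    (hw : ∀ k ∈ s, DifferentiableAt ℝ (w k) x) :
    pd (fun y => ∑ k ∈ s, w k y) i x = ∑ k ∈ s, pd (w k) i x := by
  simp [pd, fderiv_fun_sum hw]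

theorem contDiff_pd_left (hu : ContDiff ℝ n fun q : EuclideanSpace ℝ (Fin d) × ℝ => u q.1 q.2)
    (hmn : m + 1 ≤ n) :
    ContDiff ℝ m fun q : EuclideanSpace ℝ (Fin d) × ℝ => pd (fun y => u y q.2) i q.1 :=
  (contDiff_fderiv_left hu hmn).clm_apply contDiff_const

theorem hasDerivAt_pd_left
    (hu : ContDiff ℝ 2 fun q : EuclideanSpace ℝ (Fin d) × ℝ => u q.1 q.2) (t : ℝ) :
    HasDerivAt (fun s => pd (fun y => u y s) i x) (pd (fun y => deriv (u y) t) i x) t := by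
  simpa [pd] using (hasDerivAt_fderiv_left hu (by simp) x t).clm_apply
    (hasDerivAt_const t (EuclideanSpace.single i (1 : ℝ)))

theorem hasDerivAt_pd_pd_left {j : Fin d}
    (hu : ContDiff ℝ 3 fun q : EuclideanSpace ℝ (Fin d) × ℝ => u q.1 q.2) (t : ℝ) :
    HasDerivAt (fun s => pd (pd (fun y => u y s) j) i x)
      (pd (pd (fun y => deriv (u y) t) j) i x) t := by
  have h_inner (y : EuclideanSpace ℝ (Fin d)) :
      deriv (fun s => pd (fun z => u z s) j y) t = pd (fun z => deriv (u z) t) j y :=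
    (hasDerivAt_pd_left (hu.of_le (by norm_num)) t).deriv
  have h_outer := hasDerivAt_pd_left (i := i) (x := x) (u := fun y s => pd (fun z => u z s) j y)
    (contDiff_pd_left hu (by norm_num)) t
  simpa only [h_inner] using h_outer

end PartialDerivatives

section EllipticOperator

variable {d : ℕ} {A : EuclideanSpace ℝ (Fin d) → Matrix (Fin d) (Fin d) ℝ}
  {b : EuclideanSpace ℝ (Fin d) → Fin d → ℝ} {x : EuclideanSpace ℝ (Fin d)}
  {u : EuclideanSpace ℝ (Fin d) → ℝ → ℝ}

theorem ellOp_eq_nondivergence {w : EuclideanSpace ℝ (Fin d) → ℝ}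
    (hA : ∀ i j, DifferentiableAt ℝ (fun y => A y i j) x)
    (hw : ∀ j, DifferentiableAt ℝ (pd w j) x) :
    ellOp A b w x = (∑ i, ∑ j, A x i j * pd (pd w j) i x) +
      ∑ j, ((∑ i, pd (fun y => A y i j) i x) + b x j) * pd w j x := by
  have h_leibniz (i : Fin d) : pd (fun y => ∑ j, A y i j * pd w j y) i x =
      ∑ j, (A x i j * pd (pd w j) i x + pd (fun y => A y i j) i x * pd w j x) := by
    rw [pd_sum fun j _ => (hA i j).fun_mul (hw j)]
    exact Finset.sum_congr rfl fun j _ => pd_mul (hA i j) (hw j)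
  simp only [ellOp, h_leibniz, Finset.sum_add_distrib, add_mul, Finset.sum_mul]
  rw [Finset.sum_comm (f := fun i j => pd (fun y => A y i j) i x * pd w j x), add_assoc]

theorem hasDerivAt_ellOp (hA : ∀ i j, DifferentiableAt ℝ (fun y => A y i j) x)
    (hu : ContDiff ℝ 3 fun q : EuclideanSpace ℝ (Fin d) × ℝ => u q.1 q.2) (t : ℝ) :
    HasDerivAt (fun s => ellOp A b (fun y => u y s) x)
      (ellOp A b (fun y => deriv (u y) t) x) t := by
  have h_pd {w : EuclideanSpace ℝ (Fin d) → ℝ → ℝ}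
      (hw : ContDiff ℝ 2 fun q : EuclideanSpace ℝ (Fin d) × ℝ => w q.1 q.2) (s : ℝ) (j : Fin d) :
      DifferentiableAt ℝ (pd (fun y => w y s) j) x :=
    ((contDiff_pd_left (m := 1) hw (by norm_num)).comp
      (contDiff_id.prodMk contDiff_const)).differentiable one_ne_zero x
  have hu₂ : ContDiff ℝ 2 fun q : EuclideanSpace ℝ (Fin d) × ℝ => u q.1 q.2 :=
    hu.of_le (by norm_num)
  have hv : ContDiff ℝ 2 fun q : EuclideanSpace ℝ (Fin d) × ℝ => deriv (u q.1) q.2 :=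
    contDiff_deriv_right hu (by norm_num)
  simp only [fun s => ellOp_eq_nondivergence (b := b) hA (h_pd hu₂ s)]
  rw [ellOp_eq_nondivergence hA (h_pd hv t)]
  exact (HasDerivAt.fun_sum fun i _ => HasDerivAt.fun_sum fun j _ =>
      (hasDerivAt_pd_pd_left hu t).const_mul _).add
    (HasDerivAt.fun_sum fun j _ => (hasDerivAt_pd_left hu₂ t).const_mul _)

variable {c f : EuclideanSpace ℝ (Fin d) → ℝ} {T t : ℝ}

theorem time_derivative_satisfies_linear_equation
    (hA : ∀ i j, DifferentiableAt ℝ (fun y => A y i j) x)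
    (hu : ContDiff ℝ 3 fun q : EuclideanSpace ℝ (Fin d) × ℝ => u q.1 q.2) (hT : 0 < T)
    (hpde : ∀ s ∈ Set.Icc 0 T, deriv (u x) s = ellOp A b (fun y => u y s) x + c x * u x s)
    (ht : t ∈ Set.Icc 0 T) :
    deriv (deriv (u x)) t = ellOp A b (fun y => deriv (u y) t) x + c x * deriv (u x) t := by
  have hux : ContDiff ℝ 3 (u x) := hu.comp (contDiff_const.prodMk contDiff_id)
  have h_lhs : HasDerivAt (deriv (u x)) (deriv (deriv (u x)) t) t :=
    ((hux.of_le (by norm_num) : ContDiff ℝ (2 + 1) (u x)).deriv'.differentiable two_ne_zero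
      t).hasDerivAt
  have h_rhs : HasDerivAt (fun s => ellOp A b (fun y => u y s) x + c x * u x s)
      (ellOp A b (fun y => deriv (u y) t) x + c x * deriv (u x) t) t :=
    (hasDerivAt_ellOp hA hu t).add
      ((hux.differentiable three_ne_zero t).hasDerivAt.const_mul (c x))
  -- The equation is only known on `[0, T]`, so at the endpoints only one-sided derivatives agree.
  exact (uniqueDiffOn_Icc hT t ht).eq_deriv _ h_lhs.hasDerivWithinAt
    (h_rhs.hasDerivWithinAt.congr hpde (hpde t ht))

theorem time_derivative_satisfies_nonlinear_equation_general
    (hA : ∀ i j, DifferentiableAt ℝ (fun y => A y i j) x) (hfx : f x ≠ 0)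
    (hu : ContDiff ℝ 3 fun q : EuclideanSpace ℝ (Fin d) × ℝ => u q.1 q.2) (hT : 0 < T)
    (hpde : ∀ s ∈ Set.Icc 0 T, deriv (u x) s = ellOp A b (fun y => u y s) x + c x * u x s)
    (hinit : ∀ y, u y 0 = f y) (ht : t ∈ Set.Icc 0 T) :
    deriv (deriv (u x)) t
      = ellOp A b (fun y => deriv (u y) t) x
          - (ellOp A b f x / f x) * deriv (u x) t
          + (deriv (u x) 0 / f x) * deriv (u x) t := by
  have h_zero : deriv (u x) 0 = ellOp A b f x + c x * f x := by
    simpa only [hinit] using hpde 0 ⟨le_rfl, hT.le⟩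
  have hc : c x = deriv (u x) 0 / f x - ellOp A b f x / f x := by
    rw [h_zero]
    field_simp
    ring
  rw [time_derivative_satisfies_linear_equation hA hu hT hpde ht, hc]
  ring

end EllipticOperator

/-- Let `u` be of class `C²` in time and `C³` in space with continuous
mixed derivatives (formalized as joint `C³` regularity of `(x,t) ↦ u(x,t)`), solving
`u_t = Lu + c u` on `ℝ^d × [0,∞)` with `u(·,0) = f`, where `Lw = div(A∇w) + b·∇w` with
`A` `C¹` symmetric, `b` `C¹`, `f` `C²` and `f ≠ 0` on an open set `Ω`.  Then `v := ∂_t u`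
satisfies, for all `x ∈ Ω` and `t ∈ [0,T]`, the nonlinear equation
`v_t = Lv − (Lf/f) v + (v(·,0)/f) v`. -/
theorem time_derivative_satisfies_nonlinear_equation
    {d : ℕ} (hd : 2 ≤ d)
    (A : EuclideanSpace ℝ (Fin d) → Matrix (Fin d) (Fin d) ℝ)
    (hA : ∀ i j : Fin d, ContDiff ℝ 1 fun x => A x i j)
    (hAsym : ∀ x, (A x).IsSymm)
    (b : EuclideanSpace ℝ (Fin d) → Fin d → ℝ)
    (hb : ∀ i : Fin d, ContDiff ℝ 1 fun x => b x i)
    (c : EuclideanSpace ℝ (Fin d) → ℝ)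
    (f : EuclideanSpace ℝ (Fin d) → ℝ) (hf : ContDiff ℝ 2 f)
    (Ω : Set (EuclideanSpace ℝ (Fin d))) (hΩ : IsOpen Ω)
    (hfΩ : ∀ x ∈ Ω, f x ≠ 0)
    (T : ℝ) (hT : 0 < T)
    (u : EuclideanSpace ℝ (Fin d) → ℝ → ℝ)
    (hu : ContDiff ℝ 3 fun q : EuclideanSpace ℝ (Fin d) × ℝ => u q.1 q.2)
    (hpde : ∀ x, ∀ t : ℝ, 0 ≤ t →
      deriv (u x) t = ellOp A b (fun y => u y t) x + c x * u x t)
    (hinit : ∀ x, u x 0 = f x) :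
    ∀ x ∈ Ω, ∀ t ∈ Set.Icc (0 : ℝ) T,
      deriv (deriv (u x)) t
        = ellOp A b (fun y => deriv (u y) t) x
            - (ellOp A b f x / f x) * deriv (u x) t
            + (deriv (u x) 0 / f x) * deriv (u x) t := by
  intro x hx t ht
  exact time_derivative_satisfies_nonlinear_equation_general
    (fun i j => (hA i j).differentiable one_ne_zero x) (hfΩ x hx) hu hT
    (fun s hs => hpde x s hs.1) hinit ht
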